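/- Let C be a divisor and P a rational point. Every divisor A ∈ Δ_P(C) satisfies min{0, deg C} ≤ deg A ≤ max{2g − 1, deg C + 2g − 1}. -/

import Mathlib

/-!
The lower bound holds because `L(A) ≠ L(A - P)` forces `L(A)` to contain a nonzero function `f`:
then `(f) + A` is effective and `deg (f) = 0`, so `deg A ≥ 0`.

For the upper bound, put `B = A - C`. Applying Riemann-Roch to `0` and to a canonical divisor `K`
gives `deg K = 2g - 2`. If `deg B ≥ 2g`, then both `K - B` and `K - (B - P)` have negative degree
and hence trivial Riemann-Roch spaces, so Riemann-Roch gives `l(B) = l(B - P) + 1`, contradicting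
`L(B) = L(B - P)`. Thus `deg A - deg C ≤ 2g - 1`.
-/

open scoped Classical

noncomputable section

/-- Abstract data of (the function field of) a smooth, projective, absolutely
irreducible algebraic curve over a finite field `F`.  The structure records the
closed points with their degrees, the genus, the function field together with the
order (valuation) of a function at each closed point, the divisor and the degree
of a principal divisor, evaluation of functions at rational points, the
one-dimensional module of rational differentials with divisors and residues,
finite dimensionality of Riemann-Roch spaces and the Riemann-Roch theorem. -/
structure AGCurve where
  /-- the (finite) base field -/
  F : Type
  [fieldF : Field F]
  [finF : Fintype F]
  /-- the closed points of the curve -/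
  Pt : Type
  /-- the degree of a closed point -/
  ptDeg : Pt → ℤ
  ptDeg_pos : ∀ P, 0 < ptDeg P
  /-- the genus -/
  g : ℕ
  /-- the function field -/
  FF : Type
  [fieldFF : Field FF]
  [algFF : Algebra F FF]
  /-- the order of vanishing of a function at a closed point -/
  ord : Pt → FF → ℤ
  ord_zero : ∀ P, ord P (0 : FF) = 0
  ord_mul : ∀ (P : Pt) (f h : FF), f ≠ 0 → h ≠ 0 → ord P (f * h) = ord P f + ord P h
  ord_add_min : ∀ (P : Pt) (f h : FF), f ≠ 0 → h ≠ 0 → f + h ≠ 0 →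
    min (ord P f) (ord P h) ≤ ord P (f + h)
  ord_algebraMap : ∀ (P : Pt) (a : F), a ≠ 0 → ord P (algebraMap F FF a) = 0
  /-- the divisor of a (nonzero) function -/
  divOf : FF → (Pt →₀ ℤ)
  divOf_apply : ∀ (f : FF), f ≠ 0 → ∀ P, divOf f P = ord P f
  divOf_deg : ∀ (f : FF), f ≠ 0 → ((divOf f).sum fun P n => n * ptDeg P) = 0
  /-- evaluation of a function at a rational point (junk value at a pole) -/
  ev : Pt → FF → F
  ev_zero : ∀ P : Pt, ev P (0 : FF) = 0
  ev_add : ∀ (P : Pt) (f h : FF), (0 ≤ ord P f ∨ f = 0) → (0 ≤ ord P h ∨ h = 0) →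
    ev P (f + h) = ev P f + ev P h
  ev_smul : ∀ (P : Pt) (a : F) (f : FF), (0 ≤ ord P f ∨ f = 0) →
    ev P (a • f) = a * ev P f
  ev_eq_zero_iff : ∀ (P : Pt) (f : FF), ptDeg P = 1 → f ≠ 0 → 0 ≤ ord P f →
    (ev P f = 0 ↔ 0 < ord P f)
  /-- the module of rational differentials of the curve -/
  W : Type
  [addW : AddCommGroup W]
  [modW : Module FF W]
  [nontrivW : Nontrivial W]
  rank_W : Module.rank FF W = 1
  /-- the divisor of a (nonzero) rational differential -/
  divω : W → (Pt →₀ ℤ)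
  divω_smul : ∀ (f : FF) (ω : W), f ≠ 0 → ω ≠ 0 → divω (f • ω) = divOf f + divω ω
  /-- the residue of a rational differential at a rational point -/
  res : Pt → W → F
  res_zero : ∀ P : Pt, res P (0 : W) = 0
  res_add : ∀ (P : Pt) (ω η : W), res P (ω + η) = res P ω + res P η
  res_smul : ∀ (P : Pt) (a : F) (ω : W), res P ((algebraMap F FF a) • ω) = a * res P ω
  res_eq_zero_of_nonneg : ∀ (P : Pt) (ω : W), ω ≠ 0 → 0 ≤ divω ω P → res P ω = 0
  /-- Riemann-Roch spaces are finite dimensional -/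
  L_findim : ∀ D : Pt →₀ ℤ,
    Module.Finite F (Submodule.span F {f : FF | f = 0 ∨ ∀ P, -(D P) ≤ ord P f})
  /-- the Riemann-Roch theorem: `l(D) - l(K - D) = deg D + 1 - g` where `K` is the
  divisor of any nonzero rational differential -/
  riemannRoch : ∀ (D : Pt →₀ ℤ) (ω : W), ω ≠ 0 →
    (Module.finrank F (Submodule.span F {f : FF | f = 0 ∨ ∀ P, -(D P) ≤ ord P f}) : ℤ) -
      (Module.finrank F (Submodule.span F
        {f : FF | f = 0 ∨ ∀ P, -((divω ω - D) P) ≤ ord P f}) : ℤ) =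
      (D.sum fun P n => n * ptDeg P) + 1 - g

attribute [instance] AGCurve.fieldF AGCurve.finF AGCurve.fieldFF AGCurve.algFF
  AGCurve.addW AGCurve.modW AGCurve.nontrivW

namespace AGCurve

variable (X : AGCurve)

/-- divisors on the curve -/
abbrev Div := X.Pt →₀ ℤ

/-- the degree of a divisor -/
def deg (D : X.Div) : ℤ := D.sum fun P n => n * X.ptDeg P

/-- a rational point is a closed point of degree one -/
def IsRational (P : X.Pt) : Prop := X.ptDeg P = 1

/-- a point regarded as a divisor -/
def pt (P : X.Pt) : X.Div := Finsupp.single P 1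

/-- the Riemann-Roch space `L(D)`, as a subset of the function field:
`0` together with the nonzero functions `f` with `(f) + D ≥ 0` -/
def Lset (D : X.Div) : Set X.FF := {f | f = 0 ∨ ∀ P, -(D P) ≤ X.ord P f}

/-- the Riemann-Roch space `L(D)` as an `F`-subspace of the function field -/
def Lsub (D : X.Div) : Submodule X.F X.FF := Submodule.span X.F (X.Lset D)

/-- `l(D)`, the dimension of `L(D)` -/
def l (D : X.Div) : ℕ := Module.finrank X.F (X.Lsub D)

theorem Lset_mono {D D' : X.Div} (h : D ≤ D') : X.Lset D ⊆ X.Lset D' := by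
  intro f hf
  rcases hf with hf | hf
  · exact Or.inl hf
  · refine Or.inr fun P => le_trans ?_ (hf P)
    have : D P ≤ D' P := h P
    omega

theorem Lsub_mono {D D' : X.Div} (h : D ≤ D') : X.Lsub D ≤ X.Lsub D' :=
  Submodule.span_mono (X.Lset_mono h)

/-- the space `Ω(E)` of rational differentials `ω` with `(ω) ≥ E`, together with `0` -/
def Omega (E : X.Div) : Set X.W := {ω | ω = 0 ∨ ∀ P, E P ≤ X.divω ω P}

/-- a canonical divisor is the divisor of a nonzero rational differential -/
def IsCanonical (Kd : X.Div) : Prop := ∃ ω : X.W, ω ≠ 0 ∧ Kd = X.divω ω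

/-- the evaluation (geometric Goppa) code `C_L(D, G)`, the image of `L(G)` under
`f ↦ (f(P₁), …, f(Pₙ))` -/
def evCode (n : ℕ) (Pts : Fin n → X.Pt) (G : X.Div) : Set (Fin n → X.F) :=
  (fun f i => X.ev (Pts i) f) '' X.Lset G

/-- the residue (geometric Goppa) code `C_Ω(D, G)`, the image of `Ω(G - D)` under
`ω ↦ (Res_{P₁}(ω), …, Res_{Pₙ}(ω))` -/
def resCode (n : ℕ) (Pts : Fin n → X.Pt) (Dv G : X.Div) : Set (Fin n → X.F) :=
  (fun ω i => X.res (Pts i) ω) '' X.Omega (G - Dv)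

/-- the Hamming weight of a word -/
def wt {n : ℕ} {α : Type*} [Zero α] (c : Fin n → α) : ℕ :=
  (Finset.univ.filter fun i => c i ≠ 0).card

/-- the minimum distance (minimum weight of a nonzero codeword) of a code -/
def minDist {n : ℕ} {α : Type*} [Zero α] (Code : Set (Fin n → α)) : ℕ :=
  sInf {w | ∃ c ∈ Code, c ≠ 0 ∧ wt c = w}

/-- the support of a word `c`, regarded as a subdivisor of `D = P₁ + ⋯ + Pₙ` -/
def suppDiv {n : ℕ} (Pts : Fin n → X.Pt) (c : Fin n → X.F) : X.Div :=
  ∑ i ∈ Finset.univ.filter (fun i => c i ≠ 0), X.pt (Pts i)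

/-- `Γ(C) = {A : L(A) ≠ 0 and L(A - C) ≠ 0}` -/
def Gamma (C : X.Div) : Set X.Div :=
  {A | X.Lset A ≠ {0} ∧ X.Lset (A - C) ≠ {0}}

/-- `Γ*(C) = {A : L(A) ≠ 0 and L(A - C) ≠ L(-C)}` -/
def GammaStar (C : X.Div) : Set X.Div :=
  {A | X.Lset A ≠ {0} ∧ X.Lset (A - C) ≠ X.Lset (-C)}

/-- `Γ_P = {A : L(A) ≠ L(A - P)}` -/
def GammaP (P : X.Pt) : Set X.Div :=
  {A | X.Lset A ≠ X.Lset (A - X.pt P)}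

/-- `Γ_P(C) = {A : L(A) ≠ L(A - P) and L(A - C) ≠ L(A - C - P)}` -/
def GammaPC (P : X.Pt) (C : X.Div) : Set X.Div :=
  {A | X.Lset A ≠ X.Lset (A - X.pt P) ∧ X.Lset (A - C) ≠ X.Lset (A - C - X.pt P)}

/-- `Δ_P(C) = {A : L(A) ≠ L(A - P) and L(A - C) = L(A - C - P)}` -/
def DeltaPC (P : X.Pt) (C : X.Div) : Set X.Div :=
  {A | X.Lset A ≠ X.Lset (A - X.pt P) ∧ X.Lset (A - C) = X.Lset (A - C - X.pt P)}

/-- `Γ_S = ∩_{P ∈ S} Γ_P` -/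
def GammaS (S : Finset X.Pt) : Set X.Div := ⋂ P ∈ S, X.GammaP P

/-- `Γ_S(C) = ∩_{P ∈ S} Γ_P(C)` -/
def GammaSC (S : Finset X.Pt) (C : X.Div) : Set X.Div := ⋂ P ∈ S, X.GammaPC P C

/-- `Δ_S(C) = ∪_{P ∈ S} Δ_P(C)` -/
def DeltaSC (S : Finset X.Pt) (C : X.Div) : Set X.Div := ⋃ P ∈ S, X.DeltaPC P C

end AGCurve

namespace AGCurve

theorem deg_add (X : AGCurve) (D E : X.Div) : X.deg (D + E) = X.deg D + X.deg E := by
  unfold deg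
  exact Finsupp.sum_add_index' (fun _ => by simp) (fun _ _ _ => by ring)

theorem deg_sub (X : AGCurve) (D E : X.Div) : X.deg (D - E) = X.deg D - X.deg E := by
  have h := X.deg_add (D - E) E
  rw [sub_add_cancel] at h
  omega

theorem deg_zero (X : AGCurve) : X.deg 0 = 0 := by
  simp [deg]

theorem deg_pt (X : AGCurve) {P : X.Pt} (hP : X.IsRational P) : X.deg (X.pt P) = 1 := by
  have h : X.ptDeg P = 1 := hP
  simp [deg, pt, h]

theorem deg_nonneg_of_mem_Lset (X : AGCurve) {D : X.Div} {f : X.FF} (hf : f ∈ X.Lset D)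
    (hf0 : f ≠ 0) : 0 ≤ X.deg D := by
  have hord := hf.resolve_left hf0
  have hdiv : X.deg (X.divOf f) = 0 := X.divOf_deg f hf0
  have heff : 0 ≤ X.deg (X.divOf f + D) := by
    refine Finset.sum_nonneg fun Q _ => mul_nonneg ?_ (X.ptDeg_pos Q).le
    have h1 := hord Q
    have h2 := X.divOf_apply f hf0 Q
    rw [Finsupp.add_apply]
    omega
  rw [deg_add] at heff
  omega

theorem l_eq_zero_of_deg_neg (X : AGCurve) {D : X.Div} (hD : X.deg D < 0) : X.l D = 0 := by
  have h : X.Lsub D = ⊥ := by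
    refine Submodule.span_eq_bot.2 fun f hf => ?_
    by_contra hf0
    exact absurd (X.deg_nonneg_of_mem_Lset hf hf0) (not_le.2 hD)
  rw [l, h, finrank_bot]

theorem l_sub_l (X : AGCurve) (D : X.Div) {ω : X.W} (hω : ω ≠ 0) :
    (X.l D : ℤ) - X.l (X.divω ω - D) = X.deg D + 1 - X.g :=
  X.riemannRoch D ω hω

theorem deg_divω (X : AGCurve) {ω : X.W} (hω : ω ≠ 0) : X.deg (X.divω ω) = 2 * (X.g : ℤ) - 2 := by
  have h0 := X.l_sub_l 0 hω
  have hK := X.l_sub_l (X.divω ω) hω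
  rw [sub_zero, deg_zero] at h0
  rw [sub_self] at hK
  omega

/-- In degree greater than `2g - 2` the speciality term `l(K - D)` vanishes. -/
theorem l_eq_of_lt_deg (X : AGCurve) {D : X.Div} (hD : 2 * (X.g : ℤ) - 2 < X.deg D) :
    (X.l D : ℤ) = X.deg D + 1 - X.g := by
  obtain ⟨ω, hω⟩ := exists_ne (0 : X.W)
  have h := X.l_sub_l D hω
  have hneg : X.deg (X.divω ω - D) < 0 := by
    rw [deg_sub, deg_divω X hω]
    omega
  rw [l_eq_zero_of_deg_neg X hneg] at h
  omega

theorem deg_lt_of_Lset_eq (X : AGCurve) {B : X.Div} {P : X.Pt} (hP : X.IsRational P)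
    (h : X.Lset B = X.Lset (B - X.pt P)) : X.deg B < 2 * (X.g : ℤ) := by
  by_contra! hB
  have hdeg : X.deg (B - X.pt P) = X.deg B - 1 := by rw [deg_sub, deg_pt X hP]
  have h1 := X.l_eq_of_lt_deg (D := B) (by omega)
  have h2 := X.l_eq_of_lt_deg (D := B - X.pt P) (by omega)
  have hl : X.l B = X.l (B - X.pt P) := by unfold l Lsub; rw [h]
  omega

end AGCurve

/-- Let `C` be a divisor and `P` a rational point.  Every
divisor `A ∈ Δ_P(C)` satisfies
`min{0, deg C} ≤ deg A ≤ max{2g - 1, deg C + 2g - 1}`. -/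
theorem deg_bounds_of_mem_deltaPC (X : AGCurve) (C : X.Div) (P : X.Pt)
    (hPrat : X.IsRational P) (A : X.Div) (hA : A ∈ X.DeltaPC P C) :
    min 0 (X.deg C) ≤ X.deg A ∧
      X.deg A ≤ max (2 * (X.g : ℤ) - 1) (X.deg C + 2 * (X.g : ℤ) - 1) := by
  obtain ⟨hne, heq⟩ := hA
  have hlow : 0 ≤ X.deg A := by
    by_contra hneg
    -- If `deg A < 0`, then `L(A) = 0`, and so is its subspace `L(A - P)`.
    have hzero : ∀ f ∈ X.Lset A, f = 0 := fun f hf => by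
      by_contra hf0
      exact hneg (X.deg_nonneg_of_mem_Lset hf hf0)
    refine hne (Set.Subset.antisymm (fun f hf => Or.inl (hzero f hf)) (X.Lset_mono ?_))
    exact sub_le_self A (Finsupp.single_nonneg.2 zero_le_one)
  have hup := X.deg_lt_of_Lset_eq hPrat heq
  rw [AGCurve.deg_sub] at hup
  exact ⟨(min_le_left _ _).trans hlow, le_max_of_le_right (by omega)⟩
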